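/- arXiv:1806.07356 — 10 statements merged into one kernel-verified Lean document; each statement's English description precedes it below -/
import Mathlib

section
/- Let p ≥ 1 be a real number, let α ∈ (1/2, 1], let q ∈ ℝ^d and r ≥ 0, and suppose the closed ℓ_p-ball of radius r around q contains at least αW weight, i.e. ∑_{i : ‖a_i − q‖_p ≤ r} w_i ≥ αW. If x ∈ ℝ^d is any coordinatewise weighted median of the points, then ‖x − q‖_p ≤ (α/(α − 1/2))^{1/p} · r. Consequently, the closed ℓ_p-ball of radius ((α/(α − 1/2))^{1/p} + 1) · r around x contains at least αW weight. -/
/-!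
Let `B` be the set of points in the ball around `q`, of weight `V ≥ αW`. In each coordinate `j`,
the points lying on the far side of `x j` as seen from `q j` have weight at least `W / 2`, so those
among them in `B` have weight at least `V - W / 2` (`weight_inter`), and each satisfies
`|x j - q j| ≤ |a i j - q j|`. Hence
`(V - W / 2) |x j - q j| ^ p ≤ ∑ i ∈ B, w i * |a i j - q j| ^ p` (`coord_bound`). Summing over `j`
and using that points of `B` are within `r` of `q` gives `(V - W / 2) ‖x - q‖ ^ p ≤ V r ^ p`;
as `t / (t - 1 / 2)` is decreasing in `t`, `V` may be replaced by `αW`. The second claim is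
the triangle inequality (Minkowski) applied to the points of `B`.
-/

open Finset

/-- The ℓ_p norm of a vector in ℝ^d, for a real exponent p. -/
noncomputable def lpNorm {d : ℕ} (p : ℝ) (x : Fin d → ℝ) : ℝ :=
  (∑ j, |x j| ^ p) ^ (1 / p)

lemma weight_inter {ι : Type*} [Fintype ι] [DecidableEq ι] (w : ι → ℝ) (hw : ∀ i, 0 ≤ w i)
    (B T : Finset ι) :
    ∑ i ∈ B, w i + ∑ i ∈ T, w i ≤ ∑ i, w i + ∑ i ∈ B ∩ T, w i := by
  rw [← Finset.sum_union_inter]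
  gcongr
  · exact fun i _ _ => hw i
  · exact Finset.subset_univ _

/-- If a set `T` of weight at least `W / 2` consists of indices with `c ≤ u i`, then the
`w`-weighted `p`-th moment of `u` over `B` is at least `(w(B) - W / 2) c ^ p`. -/
lemma coord_bound {ι : Type*} [Fintype ι] [DecidableEq ι] (w : ι → ℝ) (hw : ∀ i, 0 ≤ w i)
    (B T : Finset ι) (p : ℝ) (hp : 0 ≤ p) (c : ℝ) (hc : 0 ≤ c) (u : ι → ℝ) (hu : ∀ i, 0 ≤ u i)
    (hT : (∑ i, w i) / 2 ≤ ∑ i ∈ T, w i) (hcu : ∀ i ∈ T, c ≤ u i) :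
    (∑ i ∈ B, w i - (∑ i, w i) / 2) * c ^ p ≤ ∑ i ∈ B, w i * u i ^ p := by
  have h := weight_inter w hw B T
  calc (∑ i ∈ B, w i - (∑ i, w i) / 2) * c ^ p
      ≤ (∑ i ∈ B ∩ T, w i) * c ^ p :=
        mul_le_mul_of_nonneg_right (by linarith) (Real.rpow_nonneg hc p)
    _ = ∑ i ∈ B ∩ T, w i * c ^ p := Finset.sum_mul _ _ _
    _ ≤ ∑ i ∈ B ∩ T, w i * u i ^ p := by
        refine Finset.sum_le_sum fun i hi => mul_le_mul_of_nonneg_left ?_ (hw i)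
        exact Real.rpow_le_rpow hc (hcu i (Finset.mem_inter.1 hi).2) hp
    _ ≤ ∑ i ∈ B, w i * u i ^ p :=
        Finset.sum_le_sum_of_subset_of_nonneg Finset.inter_subset_left
          fun i _ _ => mul_nonneg (hw i) (Real.rpow_nonneg (hu i) p)

lemma lpNorm_le_iff {d : ℕ} {p : ℝ} (hp : 0 < p) (y : Fin d → ℝ) {r : ℝ} (hr : 0 ≤ r) :
    lpNorm p y ≤ r ↔ ∑ j, |y j| ^ p ≤ r ^ p := by
  unfold lpNorm
  rw [one_div, Real.rpow_inv_le_iff_of_pos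
    (Finset.sum_nonneg fun j _ => Real.rpow_nonneg (abs_nonneg _) _) hr hp]

theorem stmt0 {n d : ℕ} (hn : 0 < n) (hd : 0 < d) (p : ℝ) (hp : 1 ≤ p)
    (a : Fin n → Fin d → ℝ) (w : Fin n → ℝ) (hw : ∀ i, 0 ≤ w i)
    (W : ℝ) (hW : W = ∑ i, w i) (hWpos : 0 < W)
    (α : ℝ) (hα : 1 / 2 < α) (hα1 : α ≤ 1)
    (q : Fin d → ℝ) (r : ℝ) (hr : 0 ≤ r)
    (hball : α * W ≤
      ∑ i ∈ Finset.univ.filter (fun i => lpNorm p (fun j => a i j - q j) ≤ r), w i)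
    (x : Fin d → ℝ)
    (hmed : ∀ j : Fin d,
      W / 2 ≤ ∑ i ∈ Finset.univ.filter (fun i => a i j ≤ x j), w i ∧
      W / 2 ≤ ∑ i ∈ Finset.univ.filter (fun i => x j ≤ a i j), w i) :
    lpNorm p (fun j => x j - q j) ≤ (α / (α - 1 / 2)) ^ (1 / p) * r ∧
    α * W ≤ ∑ i ∈ Finset.univ.filter
        (fun i => lpNorm p (fun j => a i j - x j) ≤ ((α / (α - 1 / 2)) ^ (1 / p) + 1) * r),
        w i := by
  have hp0 : 0 < p := by linarith
  have hα' : 0 < α - 1 / 2 := by linarith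
  have hK : 0 ≤ α / (α - 1 / 2) := div_nonneg (by linarith) hα'.le
  have hfirst : lpNorm p (fun j => x j - q j) ≤ (α / (α - 1 / 2)) ^ (1 / p) * r := by
    rw [lpNorm_le_iff hp0 _ (by positivity), Real.mul_rpow (by positivity) hr,
      ← Real.rpow_mul hK, one_div_mul_cancel hp0.ne', Real.rpow_one]
    set B := Finset.univ.filter (fun i => lpNorm p (fun j => a i j - q j) ≤ r) with hB
    set S := ∑ j, |x j - q j| ^ p with hS
    set V := ∑ i ∈ B, w i with hV
    have hR : 0 ≤ r ^ p := Real.rpow_nonneg hr p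
    have hcoord : ∀ j, (V - W / 2) * |x j - q j| ^ p ≤ ∑ i ∈ B, w i * |a i j - q j| ^ p := by
      intro j
      rw [hW]
      rcases le_total (q j) (x j) with h | h
      · refine coord_bound w hw B (Finset.univ.filter (fun i => x j ≤ a i j)) p hp0.le _
          (abs_nonneg _) (fun i => |a i j - q j|) (fun i => abs_nonneg _)
          (hW ▸ (hmed j).2) fun i hi => ?_
        have hi := (Finset.mem_filter.1 hi).2
        exact abs_le_abs_of_nonneg (by linarith) (by linarith)
      · refine coord_bound w hw B (Finset.univ.filter (fun i => a i j ≤ x j)) p hp0.le _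
          (abs_nonneg _) (fun i => |a i j - q j|) (fun i => abs_nonneg _)
          (hW ▸ (hmed j).1) fun i hi => ?_
        have hi := (Finset.mem_filter.1 hi).2
        exact abs_le_abs_of_nonpos (by linarith) (by linarith)
    have hsum : (V - W / 2) * S ≤ V * r ^ p := by
      calc (V - W / 2) * S = ∑ j, (V - W / 2) * |x j - q j| ^ p := Finset.mul_sum _ _ _
        _ ≤ ∑ j, ∑ i ∈ B, w i * |a i j - q j| ^ p := Finset.sum_le_sum fun j _ => hcoord j
        _ = ∑ i ∈ B, w i * ∑ j, |a i j - q j| ^ p := by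
            rw [Finset.sum_comm]
            simp_rw [Finset.mul_sum]
        _ ≤ ∑ i ∈ B, w i * r ^ p := by
            refine Finset.sum_le_sum fun i hi => mul_le_mul_of_nonneg_left ?_ (hw i)
            exact (lpNorm_le_iff hp0 _ hr).1 (Finset.mem_filter.1 hi).2
        _ = V * r ^ p := (Finset.sum_mul _ _ _).symm
    have hfinal : (α - 1 / 2) * S ≤ α * r ^ p := by
      rcases le_total S (r ^ p) with h | h
      · nlinarith
      · -- `V (S - r ^ p) ≤ (W / 2) S`, and lowering `V` to `αW` only decreases the left side.
        have h1 : α * W * (S - r ^ p) ≤ V * (S - r ^ p) :=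
          mul_le_mul_of_nonneg_right hball (by linarith)
        refine le_of_mul_le_mul_left ?_ hWpos
        nlinarith
    rw [div_mul_eq_mul_div, le_div_iff₀ hα']
    linarith
  refine ⟨hfirst, hball.trans ?_⟩
  refine Finset.sum_le_sum_of_subset_of_nonneg ?_ fun i _ _ => hw i
  refine Finset.monotone_filter_right _ fun i _ hi => ?_
  have hmink := Real.Lp_add_le Finset.univ (fun j => a i j - q j) (fun j => q j - x j) hp
  have hi' : (∑ j, |a i j - q j| ^ p) ^ (1 / p) ≤ r := hi
  have hf' : (∑ j, |q j - x j| ^ p) ^ (1 / p) ≤ (α / (α - 1 / 2)) ^ (1 / p) * r := by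
    simpa only [lpNorm, abs_sub_comm] using hfirst
  simp only [sub_add_sub_cancel] at hmink
  change (∑ j, |a i j - x j| ^ p) ^ (1 / p) ≤ _
  linarith
end

section
/- Let p ≥ 1 be a real number, let α ∈ (1/2, 1], let q ∈ ℝ^d and r ≥ 0, and suppose ∑_{i : ‖a_i − q‖_p ≤ r} w_i ≥ αW. If x ∈ ℝ^d is any coordinatewise weighted median of the points, then |x_j − q_j| ≤ r for every coordinate j, and hence ‖x − q‖_p ≤ d^{1/p} · r. -/
/-!
Two sets of indices, one of weight at least `W / 2` and one of weight at least `α W > W / 2`,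
must share an index (`exists_mem_of_heavy`). Applied to the ball `‖a_i - q‖_p ≤ r` and to each of
the two half-spaces `(a_i)_j ≤ x_j`, `x_j ≤ (a_i)_j`, this gives points of the ball on both sides
of `x` in coordinate `j`. A coordinate is bounded by the norm (`abs_le_lpNorm`), so
`q_j - r ≤ x_j ≤ q_j + r`. Summing `|x_j - q_j|^p ≤ r^p` over the `d` coordinates gives the
norm bound.
-/


open Finset

lemma abs_le_lpNorm {d : ℕ} {p : ℝ} (hp : 0 < p) (y : Fin d → ℝ) (j : Fin d) :
    |y j| ≤ lpNorm p y := by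
  have h : |y j| ^ p ≤ ∑ k, |y k| ^ p :=
    Finset.single_le_sum (f := fun k => |y k| ^ p)
      (fun k _ => Real.rpow_nonneg (abs_nonneg _) _) (Finset.mem_univ j)
  calc |y j| = (|y j| ^ p) ^ (1 / p) := by
        rw [one_div, Real.rpow_rpow_inv (abs_nonneg _) (ne_of_gt hp)]
    _ ≤ lpNorm p y :=
        Real.rpow_le_rpow (Real.rpow_nonneg (abs_nonneg _) _) h (by positivity)

lemma lpNorm_le_of_abs_le {d : ℕ} {p r : ℝ} (hp : 0 < p) (hr : 0 ≤ r) (y : Fin d → ℝ)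
    (h : ∀ j, |y j| ≤ r) : lpNorm p y ≤ (d : ℝ) ^ (1 / p) * r := by
  have hsum : ∑ j, |y j| ^ p ≤ d * r ^ p := by
    calc ∑ j, |y j| ^ p ≤ ∑ _j : Fin d, r ^ p :=
          Finset.sum_le_sum fun j _ => Real.rpow_le_rpow (abs_nonneg _) (h j) hp.le
      _ = d * r ^ p := by simp
  calc lpNorm p y ≤ (d * r ^ p) ^ (1 / p) :=
        Real.rpow_le_rpow (Finset.sum_nonneg fun j _ => Real.rpow_nonneg (abs_nonneg _) _)
          hsum (by positivity)
    _ = (d : ℝ) ^ (1 / p) * r := by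
        rw [Real.mul_rpow (Nat.cast_nonneg d) (Real.rpow_nonneg hr _), one_div,
          Real.rpow_rpow_inv hr (ne_of_gt hp)]

/-- Two index sets whose weights add up to more than the total weight intersect. -/
lemma exists_mem_of_heavy {ι : Type*} [Fintype ι] {w : ι → ℝ} (hw : ∀ i, 0 ≤ w i)
    (P Q : ι → Prop) [DecidablePred P] [DecidablePred Q]
    (h : ∑ i, w i < ∑ i ∈ Finset.univ.filter P, w i + ∑ i ∈ Finset.univ.filter Q, w i) :
    ∃ i, P i ∧ Q i := by
  classical
  by_contra! hPQ
  have hdisj : Disjoint (Finset.univ.filter P) (Finset.univ.filter Q) :=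
    Finset.disjoint_filter.2 fun i _ hi => hPQ i hi
  rw [← Finset.sum_union hdisj] at h
  exact absurd h (not_lt.2 (Finset.sum_le_sum_of_subset_of_nonneg (Finset.subset_univ _)
    fun i _ _ => hw i))

theorem stmt1 {n d : ℕ} (hn : 0 < n) (hd : 0 < d) (p : ℝ) (hp : 1 ≤ p)
    (a : Fin n → Fin d → ℝ) (w : Fin n → ℝ) (hw : ∀ i, 0 ≤ w i)
    (W : ℝ) (hW : W = ∑ i, w i) (hWpos : 0 < W)
    (α : ℝ) (hα : 1 / 2 < α) (hα1 : α ≤ 1)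
    (q : Fin d → ℝ) (r : ℝ) (hr : 0 ≤ r)
    (hball : α * W ≤
      ∑ i ∈ Finset.univ.filter (fun i => lpNorm p (fun j => a i j - q j) ≤ r), w i)
    (x : Fin d → ℝ)
    (hmed : ∀ j : Fin d,
      W / 2 ≤ ∑ i ∈ Finset.univ.filter (fun i => a i j ≤ x j), w i ∧
      W / 2 ≤ ∑ i ∈ Finset.univ.filter (fun i => x j ≤ a i j), w i) :
    (∀ j : Fin d, |x j - q j| ≤ r) ∧
    lpNorm p (fun j => x j - q j) ≤ (d : ℝ) ^ (1 / p) * r := by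
  have hp0 : 0 < p := by linarith
  have hαW : W / 2 < α * W := by nlinarith
  have key : ∀ j : Fin d, |x j - q j| ≤ r := by
    intro j
    obtain ⟨i, hi, hix⟩ := exists_mem_of_heavy hw
      (fun i => lpNorm p (fun j => a i j - q j) ≤ r) (fun i => a i j ≤ x j)
      (by linarith [(hmed j).1])
    obtain ⟨k, hk, hkx⟩ := exists_mem_of_heavy hw
      (fun i => lpNorm p (fun j => a i j - q j) ≤ r) (fun i => x j ≤ a i j)
      (by linarith [(hmed j).2])
    have h1 := abs_le.1 ((abs_le_lpNorm hp0 (fun j => a i j - q j) j).trans hi)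
    have h2 := abs_le.1 ((abs_le_lpNorm hp0 (fun j => a k j - q j) j).trans hk)
    exact abs_le.2 ⟨by linarith [h1.1], by linarith [h2.2]⟩
  exact ⟨key, lpNorm_le_of_abs_le hp0 hr _ key⟩
end

section
/- Suppose n = 2m is even, α ∈ (1/2, 1], q ∈ E, r ≥ 0, and ∑_{i : ‖a_i − q‖ ≤ r} w_i ≥ αW. For each i ∈ {1, …, m} define q_i = a_{2i−1} if w_{2i−1} ≥ w_{2i} and q_i = a_{2i} otherwise, and define v_i = w_{2i−1} + w_{2i} if ‖a_{2i−1} − a_{2i}‖ ≤ 2r and v_i = |w_{2i−1} − w_{2i}| otherwise. Then ∑_{i=1}^m v_i > 0 and ∑_{i : ‖q_i − q‖ ≤ 3r} v_i ≥ α · ∑_{i=1}^m v_i; that is, the closed ball of radius 3r around q contains at least an α fraction of the total v-weight of the points q_1, …, q_m. -/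
/-!
Both claims are obtained by summing an inequality over the pairs. For one pair, let `T` be its total
weight, `G` its weight inside `B(q, r)`, `v` its new weight and `V` the part of `v` counted in
`B(q, 3r)`; call the pair near if its two points are within `2r` of each other, and far otherwise.

* `G ≤ (T + v) / 2`: a near pair has `v = T`, and a far pair has at most one point in `B(q, r)`, so
  `G ≤ max = (T + v) / 2`. Summing, `∑ v ≥ 2αW - W > 0`.
* `G - αT ≤ V - αv`: if a near pair meets `B(q, r)`, both its points lie in `B(q, 3r)`, so
  `V = v = T`. For a far pair `T - v = 2 min`; if its heavier point is in `B(q, r)` then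
  `V = max - min` and `G = max`, otherwise `G ≤ min`; both cases reduce to `0 ≤ (2α - 1) min`.
  Summing, `∑ V - α ∑ v ≥ ∑ G - αW ≥ 0`.
-/

/-- The two per-pair inequalities behind the theorem. -/
lemma pair_bounds {E : Type*} [NormedAddCommGroup E] (a b q : E) (wa wb α r : ℝ)
    (hwa : 0 ≤ wa) (hwb : 0 ≤ wb) (hα : 1 / 2 < α) (hα1 : α ≤ 1) (hr : 0 ≤ r) (c : E)
    (hc : c = if wb ≤ wa then a else b) (v : ℝ)
    (hv : v = if ‖a - b‖ ≤ 2 * r then wa + wb else |wa - wb|) :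
    2 * ((if ‖a - q‖ ≤ r then wa else 0) + (if ‖b - q‖ ≤ r then wb else 0)) ≤ wa + wb + v ∧
    ((if ‖a - q‖ ≤ r then wa else 0) + (if ‖b - q‖ ≤ r then wb else 0)) - α * (wa + wb)
      ≤ (if ‖c - q‖ ≤ 3 * r then v else 0) - α * v := by
  have t1 : ‖a - b‖ ≤ ‖a - q‖ + ‖b - q‖ := by
    rw [norm_sub_rev b q]; exact norm_sub_le_norm_sub_add_norm_sub a q b
  have t2 : ‖a - q‖ ≤ ‖a - b‖ + ‖b - q‖ := norm_sub_le_norm_sub_add_norm_sub a b q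
  have t3 : ‖b - q‖ ≤ ‖a - b‖ + ‖a - q‖ := by
    rw [norm_sub_rev a b]; exact norm_sub_le_norm_sub_add_norm_sub b a q
  have pa : 0 ≤ (2 * α - 1) * wa := mul_nonneg (by linarith) hwa
  have pb : 0 ≤ (2 * α - 1) * wb := mul_nonneg (by linarith) hwb
  have na : 0 ≤ (1 - α) * wa := mul_nonneg (by linarith) hwa
  have nb : 0 ≤ (1 - α) * wb := mul_nonneg (by linarith) hwb
  subst hc hv
  rcases le_total wb wa with h | h
  · rw [abs_of_nonneg (sub_nonneg.2 h), if_pos h]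
    constructor <;> split_ifs <;> linarith
  · rw [abs_of_nonpos (sub_nonpos.2 h)]
    -- A tie `wa = wb` selects `a`; a far pair then has `v = 0`, so the choice is immaterial.
    rcases h.eq_or_lt with e | e
    · subst e
      rw [if_pos le_rfl]
      constructor <;> split_ifs <;> linarith
    · rw [if_neg (not_le.2 e)]
      constructor <;> split_ifs <;> linarith

open Finset

/-- Points in a normed vector space are given in pairs `(a i, b i)` (the pair
`(a_{2i-1}, a_{2i})` of the paper) with weights `(wa i, wb i)`. -/
theorem stmt2 {E : Type*} [NormedAddCommGroup E] [NormedSpace ℝ E]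
    {m : ℕ} (hm : 0 < m)
    (a b : Fin m → E) (wa wb : Fin m → ℝ) (hwa : ∀ i, 0 ≤ wa i) (hwb : ∀ i, 0 ≤ wb i)
    (W : ℝ) (hW : W = ∑ i, (wa i + wb i)) (hWpos : 0 < W)
    (α : ℝ) (hα : 1 / 2 < α) (hα1 : α ≤ 1)
    (q : E) (r : ℝ) (hr : 0 ≤ r)
    (hball : α * W ≤ ∑ i, ((if ‖a i - q‖ ≤ r then wa i else 0) +
                            (if ‖b i - q‖ ≤ r then wb i else 0)))
    (qc : Fin m → E) (hqc : ∀ i, qc i = if wb i ≤ wa i then a i else b i)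
    (v : Fin m → ℝ)
    (hv : ∀ i, v i = if ‖a i - b i‖ ≤ 2 * r then wa i + wb i else |wa i - wb i|) :
    0 < ∑ i, v i ∧
    α * ∑ i, v i ≤ ∑ i ∈ Finset.univ.filter (fun i => ‖qc i - q‖ ≤ 3 * r), v i := by
  have key := fun i => pair_bounds (a i) (b i) q (wa i) (wb i) α r (hwa i) (hwb i) hα hα1 hr
    (qc i) (hqc i) (v i) (hv i)
  have h1 := Finset.sum_le_sum fun i (_ : i ∈ Finset.univ) => (key i).1
  have h2 := Finset.sum_le_sum fun i (_ : i ∈ Finset.univ) => (key i).2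
  rw [← Finset.mul_sum, Finset.sum_add_distrib (g := v), ← hW] at h1
  rw [Finset.sum_sub_distrib, Finset.sum_sub_distrib, ← Finset.mul_sum, ← Finset.mul_sum, ← hW,
    ← Finset.sum_filter] at h2
  have hpos : 0 < (2 * α - 1) * W := mul_pos (by linarith) hWpos
  constructor <;> linarith
end

section
/- Let α ∈ (1/2, 1], set ε = α − 1/2, and let K be a real number with K ≥ 2 + 1/ε. Let q ∈ E and r ≥ 0 with ∑_{i : ‖a_i − q‖ ≤ r} w_i ≥ αW, and let a ∈ E be a point with ‖a − q‖ ≤ (K−1)r (so the closed ball of radius Kr around a contains the closed ball of radius r around q). Let T = {i : ‖a_i − a‖ ≤ Kr}. Then ∑_{i∈T} w_i > 0, and the weighted centroid c = (∑_{i∈T} w_i a_i) / (∑_{i∈T} w_i) satisfies ‖c − q‖ ≤ (K(1−ε) − 1) · r; in particular, the closed ball of radius K(1−ε)r around c contains the closed ball of radius r around q. -/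
/-!
Let `S` index the points in the ball of radius `r` around `q`. Since `S ⊆ T`, the weight of `S` is at
least `α` times that of `T`. Points of `S` are within `r` of `q`, and the other points of `T` are
within `K r + (K - 1) r = (2 K - 1) r`. Averaging over `T` bounds `‖c - q‖` by
`(α + (1 - α) (2 K - 1)) r = (K - 2 ε K + 2 ε) r`, and `ε K ≥ 1 + 2 ε` turns this into
`(K (1 - ε) - 1) r`.
-/

open Finset

theorem stmt3 {E : Type*} [NormedAddCommGroup E] [NormedSpace ℝ E]
    {n : ℕ} (hn : 0 < n)
    (a : Fin n → E) (w : Fin n → ℝ) (hw : ∀ i, 0 ≤ w i)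
    (W : ℝ) (hW : W = ∑ i, w i) (hWpos : 0 < W)
    (α : ℝ) (hα : 1 / 2 < α) (hα1 : α ≤ 1)
    (ε : ℝ) (hε : ε = α - 1 / 2)
    (K : ℝ) (hK : 2 + 1 / ε ≤ K)
    (q : E) (r : ℝ) (hr : 0 ≤ r)
    (hball : α * W ≤ ∑ i ∈ Finset.univ.filter (fun i => ‖a i - q‖ ≤ r), w i)
    (pt : E) (hpt : ‖pt - q‖ ≤ (K - 1) * r)
    (T : Finset (Fin n)) (hT : T = Finset.univ.filter (fun i => ‖a i - pt‖ ≤ K * r))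
    (c : E) (hc : c = (∑ i ∈ T, w i)⁻¹ • ∑ i ∈ T, w i • a i) :
    0 < ∑ i ∈ T, w i ∧
    ‖c - q‖ ≤ (K * (1 - ε) - 1) * r ∧
    ∀ x : E, ‖x - q‖ ≤ r → ‖x - c‖ ≤ K * (1 - ε) * r := by
  have hε0 : 0 < ε := by linarith
  have hKε : 2 * ε + 1 ≤ ε * K := by
    have h := mul_le_mul_of_nonneg_left hK hε0.le
    have h1 : ε * (2 + 1 / ε) = 2 * ε + 1 := by field_simp
    linarith
  have hK2 : 2 ≤ K := by
    have : 0 < 1 / ε := by positivity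
    linarith
  set S : Finset (Fin n) := Finset.univ.filter (fun i => ‖a i - q‖ ≤ r) with hS
  have hST : S ⊆ T := by
    intro i hi
    have hi' : ‖a i - q‖ ≤ r := by simpa [hS] using hi
    have h := norm_sub_le_norm_sub_add_norm_sub (a i) q pt
    rw [norm_sub_rev q pt] at h
    have : ‖a i - pt‖ ≤ K * r := by linarith
    simpa [hT] using this
  have hmM : ∑ i ∈ S, w i ≤ ∑ i ∈ T, w i :=
    Finset.sum_le_sum_of_subset_of_nonneg hST fun i _ _ => hw i
  have hMW : ∑ i ∈ T, w i ≤ W := by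
    rw [hW]
    exact Finset.sum_le_sum_of_subset_of_nonneg (Finset.subset_univ T) fun i _ _ => hw i
  have hM : 0 < ∑ i ∈ T, w i := by
    have : 0 < α * W := mul_pos (by linarith) hWpos
    linarith
  have hαM : α * ∑ i ∈ T, w i ≤ ∑ i ∈ S, w i :=
    (mul_le_mul_of_nonneg_left hMW (by linarith)).trans hball
  have hpoint : ∀ i ∈ T, ‖a i - q‖ ≤ (2 * K - 1) * r - (2 * K - 2) * r * (if i ∈ S then 1 else 0) := by
    intro i hi
    split_ifs with his
    · have : ‖a i - q‖ ≤ r := by simpa [hS] using his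
      linarith
    · have h1 : ‖a i - pt‖ ≤ K * r := by simpa [hT] using hi
      have h2 := norm_sub_le_norm_sub_add_norm_sub (a i) pt q
      linarith
  have hsum : ∑ i ∈ T, w i * ‖a i - q‖
      ≤ (2 * K - 1) * r * ∑ i ∈ T, w i - (2 * K - 2) * r * ∑ i ∈ S, w i := by
    have hS' : ∑ i ∈ S, w i = ∑ i ∈ T, w i * (if i ∈ S then 1 else 0) := by
      simp [Finset.inter_eq_right.mpr hST]
    rw [hS', Finset.mul_sum, Finset.mul_sum, ← Finset.sum_sub_distrib]
    refine Finset.sum_le_sum fun i hi => ?_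
    have := mul_le_mul_of_nonneg_left (hpoint i hi) (hw i)
    linarith
  have hcq : c - q = (∑ i ∈ T, w i)⁻¹ • ∑ i ∈ T, w i • (a i - q) := by
    simp only [smul_sub, Finset.sum_sub_distrib, ← Finset.sum_smul]
    rw [inv_smul_smul₀ hM.ne', hc]
  have hnorm : ‖∑ i ∈ T, w i • (a i - q)‖ ≤ ∑ i ∈ T, w i * ‖a i - q‖ := by
    refine (norm_sum_le _ _).trans (le_of_eq (Finset.sum_congr rfl fun i _ => ?_))
    rw [norm_smul, Real.norm_of_nonneg (hw i)]
  have hmain : ‖c - q‖ ≤ (K * (1 - ε) - 1) * r := by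
    rw [hcq, norm_smul, norm_inv, Real.norm_of_nonneg hM.le, inv_mul_le_iff₀ hM]
    have h1 := mul_le_mul_of_nonneg_left hαM
      (show 0 ≤ (2 * K - 2) * r from mul_nonneg (by linarith) hr)
    have h2 := mul_le_mul_of_nonneg_right hKε (mul_nonneg hr hM.le)
    have hα' : α = ε + 1 / 2 := by linarith
    rw [hα'] at h1
    linarith
  refine ⟨hM, hmain, fun x hx => ?_⟩
  have h := norm_sub_le_norm_sub_add_norm_sub x q c
  rw [norm_sub_rev q c] at h
  linarith
end

section
/- Let α ∈ (0, 1), set C = 2 + 2/α, let q ∈ X and r ≥ 0, and suppose that 2 · (weight of B(q, r)) ≥ (weight of B(q, (2C+3)r)) + αW. Let z ∈ X be a point such that B(z, Cr) intersects B(q, r), i.e. there exists x ∈ X with dist(x, z) ≤ Cr and dist(x, q) ≤ r. Then every point of B(q, r) lies in B(z, (C+2)r), every point of B(z, (C+2)r) lies in B(q, (2C+3)r), and, writing βW for the weight of B(z, (C+2)r), one has β ≥ α and the weight of B(q, r) is at least ((β+α)/2) · W, which is at least ((1+α)/2) times the weight of B(z, (C+2)r). -/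
/-!
The triangle inequality through the common point of the two balls gives
`B(q, r) ⊆ B(z, (C+2)r) ⊆ B(q, (2C+3)r)`, and ball weights are monotone under inclusion because the
weights are nonnegative. The outer inclusion turns the hypothesis into
`2 * weight B(q, r) ≥ (β + α) * W`; with the inner inclusion, `weight B(q, r) ≤ β * W`, this forces
`α ≤ β`; and `β ≤ 1` yields the last bound.
-/

open Finset

theorem stmt4 {X : Type*} [MetricSpace X] {n : ℕ} (hn : 0 < n)
    (a : Fin n → X) (w : Fin n → ℝ) (hw : ∀ i, 0 ≤ w i)
    (W : ℝ) (hW : W = ∑ i, w i) (hWpos : 0 < W)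
    (α : ℝ) (hα0 : 0 < α) (hα1 : α < 1)
    (C : ℝ) (hC : C = 2 + 2 / α)
    (ballWeight : X → ℝ → ℝ)
    (hbw : ∀ y s, ballWeight y s = ∑ i ∈ Finset.univ.filter (fun i => dist (a i) y ≤ s), w i)
    (q : X) (r : ℝ) (hr : 0 ≤ r)
    (hmain : ballWeight q ((2 * C + 3) * r) + α * W ≤ 2 * ballWeight q r)
    (z : X) (hz : ∃ x : X, dist x z ≤ C * r ∧ dist x q ≤ r)
    (β : ℝ) (hβ : β * W = ballWeight z ((C + 2) * r)) :
    (∀ x : X, dist x q ≤ r → dist x z ≤ (C + 2) * r) ∧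
    (∀ x : X, dist x z ≤ (C + 2) * r → dist x q ≤ (2 * C + 3) * r) ∧
    α ≤ β ∧
    ((β + α) / 2) * W ≤ ballWeight q r ∧
    ((1 + α) / 2) * ballWeight z ((C + 2) * r) ≤ ballWeight q r := by
  obtain ⟨x₀, hx₀z, hx₀q⟩ := hz
  have hsub₁ : ∀ x : X, dist x q ≤ r → dist x z ≤ (C + 2) * r := by
    intro x hx
    have h₁ := dist_triangle4 x q x₀ z
    rw [dist_comm q x₀] at h₁
    linarith
  have hsub₂ : ∀ x : X, dist x z ≤ (C + 2) * r → dist x q ≤ (2 * C + 3) * r := by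
    intro x hx
    have h₁ := dist_triangle4 x z x₀ q
    rw [dist_comm z x₀] at h₁
    linarith
  have hmono : ∀ (y y' : X) (s s' : ℝ), (∀ x : X, dist x y ≤ s → dist x y' ≤ s') →
      ballWeight y s ≤ ballWeight y' s' := by
    intro y y' s s' h
    rw [hbw, hbw]
    exact Finset.sum_le_sum_of_subset_of_nonneg
      (Finset.monotone_filter_right _ fun i _ hi => h (a i) hi) fun i _ _ => hw i
  have hqz := hmono _ _ _ _ hsub₁
  have hzq := hmono _ _ _ _ hsub₂
  have hzW : ballWeight z ((C + 2) * r) ≤ W := by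
    rw [hbw, hW]
    exact Finset.sum_le_sum_of_subset_of_nonneg (Finset.filter_subset _ _) fun i _ _ => hw i
  have hhalf : ((β + α) / 2) * W ≤ ballWeight q r := by linarith
  refine ⟨hsub₁, hsub₂, ?_, hhalf, ?_⟩
  · exact le_of_mul_le_mul_right (by linarith) hWpos
  · -- Since `β * W ≤ W`, replacing `α * W` by `α * (β * W)` only lowers the bound `hhalf`.
    have h := mul_le_mul_of_nonneg_left hzW hα0.le
    linarith
end

section
/- Let α ∈ (0, 1], let p ∈ X and r ≥ 0, and suppose the weight of B(p, r) is at least αW. Then there exists a natural number s with (3/2)^s · α ≤ 1 such that the weight of B(p, (8/α + 7)^s · r) is at least (3/2)^s · αW while the weight of B(p, (8/α + 7)^{s+1} · r) is strictly less than (3/2)^{s+1} · αW. Consequently, writing B' = B(p, (8/α+7)^s · r), the weight of B' exceeds (weight of B(p, (8/α+7)^{s+1} · r)) − (weight of B') + (α/2) · W. -/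
/-!
Write `b t` for the weight of the ball of radius `(8/α + 7)^t * r`. The bound
`(3/2)^t * α * W ≤ b t` holds for `t = 0`, and fails for large `t` because `b t ≤ W` while
`(3/2)^t * α` is unbounded. Take `s` to be the predecessor of the first failure.
The last inequality follows from `b (s+1) < (3/2) * (3/2)^s * α * W`,
`2 * b s ≥ 2 * (3/2)^s * α * W` and `(3/2)^s ≥ 1`.
-/

open Finset

theorem stmt5 {X : Type*} [MetricSpace X] {n : ℕ} (hn : 0 < n)
    (a : Fin n → X) (w : Fin n → ℝ) (hw : ∀ i, 0 ≤ w i)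
    (W : ℝ) (hW : W = ∑ i, w i) (hWpos : 0 < W)
    (α : ℝ) (hα0 : 0 < α) (hα1 : α ≤ 1)
    (ballWeight : X → ℝ → ℝ)
    (hbw : ∀ y s, ballWeight y s = ∑ i ∈ Finset.univ.filter (fun i => dist (a i) y ≤ s), w i)
    (p : X) (r : ℝ) (hr : 0 ≤ r)
    (hball : α * W ≤ ballWeight p r) :
    ∃ s : ℕ, ((3 : ℝ) / 2) ^ s * α ≤ 1 ∧
      ((3 : ℝ) / 2) ^ s * α * W ≤ ballWeight p ((8 / α + 7) ^ s * r) ∧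
      ballWeight p ((8 / α + 7) ^ (s + 1) * r) < ((3 : ℝ) / 2) ^ (s + 1) * α * W ∧
      ballWeight p ((8 / α + 7) ^ (s + 1) * r) - ballWeight p ((8 / α + 7) ^ s * r) +
          (α / 2) * W < ballWeight p ((8 / α + 7) ^ s * r) := by
  classical
  have hle : ∀ t, ballWeight p t ≤ W := fun t => by
    rw [hbw, hW]
    exact Finset.sum_le_sum_of_subset_of_nonneg (Finset.filter_subset _ _) fun i _ _ => hw i
  have hex : ∃ t : ℕ, ballWeight p ((8 / α + 7) ^ t * r) < ((3 : ℝ) / 2) ^ t * α * W := by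
    obtain ⟨t, ht⟩ := pow_unbounded_of_one_lt (1 / α) (by norm_num : (1 : ℝ) < 3 / 2)
    rw [div_lt_iff₀ hα0] at ht
    exact ⟨t, (hle _).trans_lt (lt_mul_of_one_lt_left hWpos ht)⟩
  obtain ⟨s, hs⟩ : ∃ s, Nat.find hex = s + 1 := by
    refine Nat.exists_eq_succ_of_ne_zero fun h0 => ?_
    have h := Nat.find_spec hex
    rw [h0] at h
    simp only [pow_zero, one_mul] at h
    exact absurd hball (not_le.mpr h)
  have hlt := Nat.find_spec hex
  rw [hs] at hlt
  have hge := not_lt.mp (Nat.find_min hex (m := s) (by omega))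
  refine ⟨s, ?_, hge, hlt, ?_⟩
  · exact le_of_mul_le_mul_right (by linarith [hle ((8 / α + 7) ^ s * r)]) hWpos
  · have h1 : 1 * (α * W) ≤ ((3 : ℝ) / 2) ^ s * (α * W) :=
      mul_le_mul_of_nonneg_right (one_le_pow₀ (by norm_num)) (by positivity)
    have h2 : ((3 : ℝ) / 2) ^ (s + 1) * α * W = 3 / 2 * (((3 : ℝ) / 2) ^ s * α * W) := by ring
    linarith
end

section
/- Let α ∈ (1/2, 1]. For each i ∈ {1, …, n} let r_i be the smallest s ≥ 0 such that the weight of B(a_i, s) is at least αW (this minimum exists), and let i* be an index at which r_{i*} = min(r_1, …, r_n); set p = a_{i*} and s* = r_{i*}. Then for every q ∈ X and r ≥ 0 such that the weight of B(q, r) is at least αW, one has s* ≤ 2r and dist(p, q) ≤ s* + r; in particular, B(p, s*) is a ball of radius at most 2r containing at least αW weight which intersects every ball of radius r containing at least αW weight. -/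
/-!
A ball carrying weight at least `α W > 0` contains some point `a j`. If `B(q, r)` is such a ball,
then `B(q, r) ⊆ B(a j, 2r)`, so `r_j ≤ 2r` and hence `s* ≤ 2r`. Since `α > 1/2`, two balls carrying
weight at least `α W` each cannot have disjoint index sets, so `B(p, s*)` and `B(q, r)` share some
`a k`, and the triangle inequality through `a k` bounds `dist p q`. The minimal radii exist because
the weight of `B(c, s)` changes only when `s` crosses one of the finitely many distances
`dist (a j) c` (`exists_isLeast_radius`).
-/

open Finset

/-- An index set of positive weight is nonempty, so it has a point farthest from `c`; shrinking the
radius to that distance keeps the index set. Hence the least admissible radius is the least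
admissible value among the finitely many distances `dist (a j) c`. -/
theorem exists_isLeast_radius {X : Type*} [MetricSpace X] {n : ℕ}
    (a : Fin n → X) (w : Fin n → ℝ) (t : ℝ) (ht : 0 < t) (htW : t ≤ ∑ i, w i) (c : X) :
    ∃ s : ℝ, IsLeast {s : ℝ | 0 ≤ s ∧
      t ≤ ∑ j ∈ Finset.univ.filter (fun j => dist (a j) c ≤ s), w j} s := by
  classical
  have shrink : ∀ s, t ≤ ∑ j ∈ Finset.univ.filter (fun j => dist (a j) c ≤ s), w j →
      ∃ k, dist (a k) c ≤ s ∧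
        t ≤ ∑ j ∈ Finset.univ.filter (fun j => dist (a j) c ≤ dist (a k) c), w j := by
    intro s hs
    obtain ⟨k, hk, hmax⟩ := Finset.exists_max_image
      (Finset.univ.filter (fun j => dist (a j) c ≤ s)) (fun j => dist (a j) c)
      (Finset.nonempty_of_sum_ne_zero (ht.trans_le hs).ne')
    have hks : dist (a k) c ≤ s := (Finset.mem_filter.1 hk).2
    refine ⟨k, hks, hs.trans_eq (Finset.sum_congr ?_ fun _ _ => rfl)⟩
    ext j
    simp only [Finset.mem_filter, Finset.mem_univ, true_and]
    exact ⟨fun h => hmax j (by simpa using h), fun h => h.trans hks⟩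
  let K : Finset (Fin n) := Finset.univ.filter fun k =>
    t ≤ ∑ j ∈ Finset.univ.filter (fun j => dist (a j) c ≤ dist (a k) c), w j
  have hK : K.Nonempty := by
    -- The sum of all distances is a radius at which the ball contains every point.
    obtain ⟨k, -, hk⟩ := shrink (∑ i, dist (a i) c) (by
      rw [Finset.filter_true_of_mem fun j _ => Finset.single_le_sum
        (f := fun i => dist (a i) c) (fun _ _ => dist_nonneg) (Finset.mem_univ j)]
      exact htW)
    exact ⟨k, by simpa [K] using hk⟩
  obtain ⟨k, hk, hmin⟩ := Finset.exists_min_image K (fun k => dist (a k) c) hK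
  refine ⟨dist (a k) c, ⟨dist_nonneg, (Finset.mem_filter.1 hk).2⟩, ?_⟩
  rintro s ⟨-, hs⟩
  obtain ⟨m, hms, hm⟩ := shrink s hs
  exact (hmin m (by simpa [K] using hm)).trans hms

theorem stmt9 {X : Type*} [MetricSpace X] {n : ℕ} (hn : 0 < n)
    (a : Fin n → X) (w : Fin n → ℝ) (hw : ∀ i, 0 ≤ w i)
    (W : ℝ) (hW : W = ∑ i, w i) (hWpos : 0 < W)
    (α : ℝ) (hα : 1 / 2 < α) (hα1 : α ≤ 1)
    (rr : Fin n → ℝ)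
    (hrr : ∀ i : Fin n, IsLeast {s : ℝ | 0 ≤ s ∧
      α * W ≤ ∑ j ∈ Finset.univ.filter (fun j => dist (a j) (a i) ≤ s), w j} (rr i))
    (istar : Fin n) (histar : ∀ i : Fin n, rr istar ≤ rr i) :
    (∀ i : Fin n, ∃ s : ℝ, IsLeast {s : ℝ | 0 ≤ s ∧
      α * W ≤ ∑ j ∈ Finset.univ.filter (fun j => dist (a j) (a i) ≤ s), w j} s) ∧
    ∀ (q : X) (r : ℝ), 0 ≤ r →
      α * W ≤ ∑ i ∈ Finset.univ.filter (fun i => dist (a i) q ≤ r), w i →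
      rr istar ≤ 2 * r ∧ dist (a istar) q ≤ rr istar + r := by
  classical
  have hpos : 0 < α * W := by positivity
  refine ⟨fun i => exists_isLeast_radius a w (α * W) hpos (by rw [← hW]; nlinarith) (a i), ?_⟩
  intro q r hr hq
  constructor
  · obtain ⟨j, hj⟩ := Finset.nonempty_of_sum_ne_zero (hpos.trans_le hq).ne'
    have hjr : dist (a j) q ≤ r := (Finset.mem_filter.1 hj).2
    refine (histar j).trans ((hrr j).2 ⟨by positivity, hq.trans ?_⟩)
    refine Finset.sum_le_sum_of_subset_of_nonneg ?_ fun i _ _ => hw i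
    intro i hi
    have hir : dist (a i) q ≤ r := (Finset.mem_filter.1 hi).2
    simp only [Finset.mem_filter, Finset.mem_univ, true_and]
    linarith [dist_triangle_right (a i) (a j) q]
  · have hp := (hrr istar).1.2
    have hmeet : ¬ Disjoint (Finset.univ.filter fun j => dist (a j) (a istar) ≤ rr istar)
        (Finset.univ.filter fun j => dist (a j) q ≤ r) := by
      intro hd
      have hle := Finset.sum_le_sum_of_subset_of_nonneg (f := w)
        (Finset.subset_univ
          ((Finset.univ.filter fun j => dist (a j) (a istar) ≤ rr istar) ∪
            Finset.univ.filter fun j => dist (a j) q ≤ r)) fun i _ _ => hw i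
      rw [Finset.sum_union hd, ← hW] at hle
      nlinarith
    obtain ⟨k, hk₁, hk₂⟩ := Finset.not_disjoint_iff.1 hmeet
    have h₁ := (Finset.mem_filter.1 hk₁).2
    have h₂ := (Finset.mem_filter.1 hk₂).2
    linarith [dist_triangle_left (a istar) q (a k)]
end

section
/- Let α ∈ (0, 1]. Then there exist ℓ ≤ ⌊1/α⌋, indices i_1, …, i_ℓ ∈ {1, …, n}, and radii s_1, …, s_ℓ ≥ 0 such that: (a) for each k ∈ {1, …, ℓ}, the weight of B(a_{i_k}, s_k) is at least αW; and (b) for every q ∈ X and r ≥ 0 such that the weight of B(q, r) is at least αW, there exists k ∈ {1, …, ℓ} with s_k ≤ 2r and with B(q, r) ∩ B(a_{i_k}, s_k) nonempty (i.e. some x ∈ X satisfies dist(x, q) ≤ r and dist(x, a_{i_k}) ≤ s_k). -/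
open Finset

/-!
The balls are chosen greedily. Keep a set `U` of surviving indices, initially everything. As long as
some ball centred at one of the points captures weight at least `c = α W` from `U`, choose such a
ball of least radius `s` and delete its points from `U`. Each step deletes weight at least `c`, so
there are at most `W / c = 1 / α` steps.

Let `B(q, r)` be a ball that captures weight at least `c`, and consider the first chosen ball that
meets it in a surviving point. At that moment no point of `B(q, r)` has been deleted. For any `a i`
in `B(q, r)`, the ball `B(a i, 2 r)` contains `B(q, r)`, so it was a candidate, and minimality
gives `s ≤ 2 r`. Some chosen ball must meet `B(q, r)`, since the process stops only when no
candidate is left.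
-/

/-- A ball `B(q, r)` of surviving weight at least `c` yields a ball centred at one of the points, of
radius at most `2 r` and again of surviving weight at least `c`. Its radius is taken to be a
distance between two of the points, so that only finitely many radii compete in the greedy
choice. -/
lemma exists_candidate {X : Type*} [MetricSpace X] {n : ℕ} (a : Fin n → X) (w : Fin n → ℝ)
    (hw : ∀ i, 0 ≤ w i) (c : ℝ) (hc : 0 < c) (U : Finset (Fin n)) (q : X) (r : ℝ)
    (h : c ≤ ∑ i ∈ U.filter (fun i => dist (a i) q ≤ r), w i) :
    ∃ p : Fin n × Fin n, dist (a p.2) (a p.1) ≤ 2 * r ∧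
      c ≤ ∑ i ∈ U.filter (fun i => dist (a i) (a p.1) ≤ dist (a p.2) (a p.1)), w i := by
  have hne : (U.filter (fun i => dist (a i) q ≤ r)).Nonempty := by
    rw [nonempty_iff_ne_empty]
    intro h0
    rw [h0, sum_empty] at h
    linarith
  obtain ⟨i, hi⟩ := hne
  obtain ⟨j, hj, hmax⟩ := exists_max_image _ (fun j => dist (a j) (a i)) ⟨i, hi⟩
  refine ⟨(i, j), ?_, h.trans (sum_le_sum_of_subset_of_nonneg ?_ fun k _ _ => hw k)⟩
  · have h1 := (mem_filter.1 hi).2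
    have h2 := (mem_filter.1 hj).2
    have h3 := dist_triangle_right (a j) (a i) q
    dsimp only
    linarith
  · intro k hk
    exact mem_filter.2 ⟨(mem_filter.1 hk).1, hmax k hk⟩

/-- The greedy selection started from an arbitrary set `U` of surviving indices; the list holds
the centres and radii of the chosen balls. -/
lemma greedy_selection {X : Type*} [MetricSpace X] {n : ℕ} (a : Fin n → X) (w : Fin n → ℝ)
    (hw : ∀ i, 0 ≤ w i) (c : ℝ) (hc : 0 < c) (U : Finset (Fin n)) :
    ∃ L : List (Fin n × ℝ), (L.length : ℝ) * c ≤ ∑ i ∈ U, w i ∧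
      (∀ p ∈ L, 0 ≤ p.2 ∧
        c ≤ ∑ i ∈ Finset.univ.filter (fun i => dist (a i) (a p.1) ≤ p.2), w i) ∧
      ∀ (q : X) (r : ℝ), c ≤ ∑ i ∈ U.filter (fun i => dist (a i) q ≤ r), w i →
        ∃ p ∈ L, p.2 ≤ 2 * r ∧ ∃ x : X, dist x q ≤ r ∧ dist x (a p.1) ≤ p.2 := by
  classical
  induction U using Finset.strongInduction with
  | H U ih =>
  let C : Finset (Fin n × Fin n) := Finset.univ.filter (fun p =>
    c ≤ ∑ i ∈ U.filter (fun i => dist (a i) (a p.1) ≤ dist (a p.2) (a p.1)), w i)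
  by_cases hC : C.Nonempty
  · obtain ⟨p, hp, hmin⟩ := exists_min_image C (fun p => dist (a p.2) (a p.1)) hC
    have hpc := (mem_filter.1 hp).2
    set s := dist (a p.2) (a p.1) with hs
    have hsplit := sum_filter_add_sum_filter_not U (fun i => dist (a i) (a p.1) ≤ s) w
    have hlt : U.filter (fun i => ¬ dist (a i) (a p.1) ≤ s) ⊂ U := by
      refine (filter_subset _ _).ssubset_of_ne fun heq => ?_
      rw [heq] at hsplit
      linarith
    obtain ⟨L, hlen, hL, hcov⟩ := ih _ hlt
    refine ⟨(p.1, s) :: L, ?_, ?_, ?_⟩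
    · rw [List.length_cons]
      push_cast
      linarith
    · intro p' hp'
      rcases List.mem_cons.1 hp' with rfl | hp'
      · exact ⟨dist_nonneg, hpc.trans (sum_le_sum_of_subset_of_nonneg
          (filter_subset_filter _ (subset_univ _)) fun k _ _ => hw k)⟩
      · exact hL p' hp'
    · intro q r hq
      by_cases hmeet : ∃ j ∈ U, dist (a j) q ≤ r ∧ dist (a j) (a p.1) ≤ s
      · obtain ⟨j, -, hjq, hjp⟩ := hmeet
        obtain ⟨p', hp'r, hp'c⟩ := exists_candidate a w hw c hc U q r hq
        have hle := hmin p' (mem_filter.2 ⟨mem_univ _, hp'c⟩)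
        exact ⟨(p.1, s), List.mem_cons_self, hle.trans hp'r, a j, hjq, hjp⟩
      · obtain ⟨p', hp', h⟩ := hcov q r (hq.trans (sum_le_sum_of_subset_of_nonneg
          (fun k hk => by
            obtain ⟨hkU, hkq⟩ := mem_filter.1 hk
            exact mem_filter.2 ⟨mem_filter.2 ⟨hkU, fun hks => hmeet ⟨k, hkU, hkq, hks⟩⟩, hkq⟩)
          fun k _ _ => hw k))
        exact ⟨p', List.mem_cons_of_mem _ hp', h⟩
  · refine ⟨[], by simpa using sum_nonneg fun i _ => hw i, by simp, fun q r hq => ?_⟩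
    obtain ⟨p, -, hp⟩ := exists_candidate a w hw c hc U q r hq
    exact (hC ⟨p, mem_filter.2 ⟨mem_univ _, hp⟩⟩).elim

theorem stmt10 {X : Type*} [MetricSpace X] {n : ℕ} (hn : 0 < n)
    (a : Fin n → X) (w : Fin n → ℝ) (hw : ∀ i, 0 ≤ w i)
    (W : ℝ) (hW : W = ∑ i, w i) (hWpos : 0 < W)
    (α : ℝ) (hα0 : 0 < α) (hα1 : α ≤ 1) :
    ∃ ℓ : ℕ, ℓ ≤ ⌊1 / α⌋₊ ∧
      ∃ (idx : Fin ℓ → Fin n) (s : Fin ℓ → ℝ),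
        (∀ k : Fin ℓ, 0 ≤ s k ∧
          α * W ≤ ∑ i ∈ Finset.univ.filter (fun i => dist (a i) (a (idx k)) ≤ s k), w i) ∧
        ∀ (q : X) (r : ℝ), 0 ≤ r →
          α * W ≤ ∑ i ∈ Finset.univ.filter (fun i => dist (a i) q ≤ r), w i →
          ∃ k : Fin ℓ, s k ≤ 2 * r ∧ ∃ x : X, dist x q ≤ r ∧ dist x (a (idx k)) ≤ s k := by
  obtain ⟨L, hlen, hL, hcov⟩ :=
    greedy_selection a w hw (α * W) (mul_pos hα0 hWpos) Finset.univ
  refine ⟨L.length, ?_, fun k => (L.get k).1, fun k => (L.get k).2,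
    fun k => hL _ (L.get_mem k), fun q r _ hq => ?_⟩
  · rw [← hW, ← mul_assoc] at hlen
    refine Nat.le_floor ((le_div_iff₀ hα0).2 (le_of_mul_le_mul_right ?_ hWpos))
    linarith
  · obtain ⟨p, hp, h⟩ := hcov q r hq
    obtain ⟨k, rfl⟩ := List.get_of_mem hp
    exact ⟨k, h⟩
end

section
/- Let δ ≥ 0 and α ∈ (0, 1), suppose dist(a_i, a_j) ≥ 1/2 for all i ≠ j, and let y be one of the points a_1, …, a_n such that ∑_{i=1}^n dist(y, a_i) ≤ n·(1/2 + δ). If s ≥ 0 is such that strictly fewer than αn of the points lie within distance strictly less than s of y, i.e. #{ i : dist(y, a_i) < s } < αn, then s ≤ 1/2 + (δ + 1/(2n))/(1 − α). In particular, the smallest radius K such that the closed ball of radius K around y contains at least αn of the points satisfies K ≤ 1/2 + (δ + 1/(2n))/(1 − α). -/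
/-!
Let `y = a i₀` and `s > 1/2`. Each distance satisfies
`dist y (a i) ≥ 1/2 + (s - 1/2) [dist y (a i) ≥ s] - 1/2 [i = i₀]`: the separation gives `1/2` off
`i₀`, and the last term accounts for the distance `0` at `i₀`. Summing over `i`, where more than
`(1 - α) n` indices have distance at least `s`, gives `(s - 1/2) (1 - α) n ≤ n δ + 1/2`.

The bound on the minimal radius `K` is the case `s = K`: if the open ball of radius `K` already
held `α n` points, the largest distance occurring in it would be a smaller admissible radius.
-/

open Finset

theorem stmt12 {X : Type*} [MetricSpace X] {n : ℕ} (hn : 0 < n)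
    (a : Fin n → X)
    (δ : ℝ) (hδ : 0 ≤ δ)
    (α : ℝ) (hα0 : 0 < α) (hα1 : α < 1)
    (hsep : ∀ i j : Fin n, i ≠ j → 1 / 2 ≤ dist (a i) (a j))
    (y : X) (hy : ∃ i : Fin n, y = a i)
    (hsum : ∑ i, dist y (a i) ≤ (n : ℝ) * (1 / 2 + δ)) :
    (∀ s : ℝ, 0 ≤ s →
      ((Finset.univ.filter (fun i => dist y (a i) < s)).card : ℝ) < α * n →
      s ≤ 1 / 2 + (δ + 1 / (2 * n)) / (1 - α)) ∧
    (∀ K : ℝ, IsLeast {K : ℝ | 0 ≤ K ∧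
        α * n ≤ ((Finset.univ.filter (fun i => dist y (a i) ≤ K)).card : ℝ)} K →
      K ≤ 1 / 2 + (δ + 1 / (2 * n)) / (1 - α)) := by
  obtain ⟨i₀, rfl⟩ := hy
  have hn' : (0 : ℝ) < n := by exact_mod_cast hn
  have h1α : 0 < 1 - α := by linarith
  have part1 : ∀ s : ℝ, 0 ≤ s →
      ((Finset.univ.filter (fun i => dist (a i₀) (a i) < s)).card : ℝ) < α * n →
      s ≤ 1 / 2 + (δ + 1 / (2 * n)) / (1 - α) := by
    intro s _ hs
    rcases le_or_gt s (1 / 2) with h | h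
    · have : 0 ≤ (δ + 1 / (2 * n)) / (1 - α) := by positivity
      linarith
    -- The indicator of `dist ≥ s` is written as one minus the indicator of `dist < s`.
    have key : ∀ i : Fin n, 1 / 2 + (s - 1 / 2) * (1 - if dist (a i₀) (a i) < s then (1 : ℝ) else 0)
        - 1 / 2 * (if i = i₀ then (1 : ℝ) else 0) ≤ dist (a i₀) (a i) := by
      intro i
      by_cases hi : i = i₀
      · subst hi
        have : (0 : ℝ) < s := by linarith
        simp [this]
      · have h1 := hsep i₀ i (Ne.symm hi)
        by_cases h2 : dist (a i₀) (a i) < s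
        · simp only [hi, h2, if_true, if_false]; linarith
        · simp only [hi, h2, if_false]; linarith
    have hle := (Finset.sum_le_sum (fun i (_ : i ∈ Finset.univ) => key i)).trans hsum
    rw [Finset.sum_sub_distrib, Finset.sum_add_distrib, ← Finset.mul_sum, ← Finset.mul_sum,
      Finset.sum_sub_distrib, Finset.sum_boole, Finset.sum_ite_eq'] at hle
    simp only [Finset.sum_const, Finset.card_univ, Fintype.card_fin, nsmul_eq_mul,
      Finset.mem_univ, if_true] at hle
    have hmul : (s - 1 / 2) * ((1 - α) * n) ≤ n * δ + 1 / 2 := by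
      have := mul_le_mul_of_nonneg_left hs.le (sub_nonneg.2 h.le)
      linarith
    have hdiv : s - 1 / 2 ≤ (δ + 1 / (2 * n)) / (1 - α) := by
      rw [le_div_iff₀ h1α]
      have e : δ + 1 / (2 * n) = (n * δ + 1 / 2) / n := by field_simp
      rw [e, le_div_iff₀ hn']
      linarith
    linarith
  refine ⟨part1, ?_⟩
  rintro K ⟨⟨hK0, -⟩, hmin⟩
  refine part1 K hK0 ?_
  by_contra! hcon
  have hne : (Finset.univ.filter (fun i => dist (a i₀) (a i) < K)).Nonempty := by
    rw [← Finset.card_pos]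
    have : (0 : ℝ) < α * n := by positivity
    exact_mod_cast this.trans_le hcon
  obtain ⟨j, hj, hmax⟩ := Finset.exists_max_image _ (fun i => dist (a i₀) (a i)) hne
  have hjK := (Finset.mem_filter.1 hj).2
  refine absurd (hmin ⟨dist_nonneg, hcon.trans ?_⟩) (not_le.2 hjK)
  exact_mod_cast Finset.card_le_card fun i hi =>
    Finset.mem_filter.2 ⟨Finset.mem_univ i, hmax i hi⟩
end

section
/- For each positive integer k, let S_k be the set of all k × k real matrices with every entry equal to 1 or −1, excluding the matrix all of whose entries are −1, so that |S_k| = 2^{k²} − 1. Then: (a) for every entry position (i, j), strictly more than half of the matrices in S_k have (i, j)-entry equal to 1, so the entrywise median of S_k is the all-ones matrix J_k; (b) the ℓ2 operator norm of J_k equals k = (k²)^{1/2}; and (c) the fraction #{ M ∈ S_k : ‖M‖ > (k²)^{1/3} } / |S_k|, where ‖·‖ denotes the ℓ2 operator norm on k × k real matrices, tends to 0 as k → ∞. Hence, for d = k² and n = 2^d − 1, among these n matrices n − o(n) lie in the operator-norm ball of radius d^{1/3} around the zero matrix, while the entrywise median has operator norm d^{1/2}. -/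
/-!
The counting claims follow from the involution `M ↦ -M` on the cube `signMats k` of all sign
matrices: it exchanges the matrices with `(i, j)`-entry `1` and those with `(i, j)`-entry `-1`, and
only the second class loses a member when the all `-1` matrix is removed.  The norm of the all-ones
matrix is Cauchy–Schwarz, with equality at the all-ones vector.

For the limit, the operator norm is controlled by a finite net.  Rounding each coordinate of a unit
vector towards zero to a multiple of `1 / (4k)` moves it by at most `1/4`, so `‖M‖` is at most twice
the maximum of the bilinear form `∑ M i j * x j * y i` over pairs of grid vectors of norm at most
one (`matOpNorm_le_of_net`).  For fixed `x, y`, the exponential moment of the form over uniformly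
random signs is `∏ cosh (l * x j * y i) ≤ exp (l² / 2)` (`sum_exp_form_le`).  A union bound over
the at most `(8k+1)^(2k)` pairs, with `l = t / 2`, bounds the fraction of matrices with `‖M‖ > t` by
`(8k+1)^(2k) * exp (-t² / 8)`.  For `t = k^(2/3)` this tends to zero because
`k log k = o(k^(4/3))`, so even this crude net is small enough.
-/

open Finset

/-- The ℓ2 operator norm of a `k × k` real matrix, i.e. the operator norm of the
induced linear map on Euclidean space `ℝ^k`. -/
noncomputable def matOpNorm (k : ℕ) (M : Matrix (Fin k) (Fin k) ℝ) : ℝ :=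
  ‖LinearMap.toContinuousLinearMap (Matrix.toEuclideanLin M)‖

/-- The set of `k × k` matrices with all entries `±1`, excluding the all `-1` matrix. -/
def Sk (k : ℕ) : Set (Matrix (Fin k) (Fin k) ℝ) :=
  {M | (∀ i j, M i j = 1 ∨ M i j = -1) ∧ ¬(∀ i j, M i j = -1)}

/-! ### Sign matrices and counting -/

/-- All `k × k` matrices with entries `±1`, including the all `-1` matrix. -/
noncomputable def signMats (k : ℕ) : Finset (Matrix (Fin k) (Fin k) ℝ) :=
  Fintype.piFinset fun _ => Fintype.piFinset fun _ => ({1, -1} : Finset ℝ)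

lemma mem_signMats {k : ℕ} {M : Matrix (Fin k) (Fin k) ℝ} :
    M ∈ signMats k ↔ ∀ i j, M i j = 1 ∨ M i j = -1 := by
  unfold signMats
  refine Fintype.mem_piFinset.trans (forall_congr' fun i => ?_)
  refine Fintype.mem_piFinset.trans (forall_congr' fun j => ?_)
  simp

lemma card_signMats (k : ℕ) : (signMats k).card = 2 ^ (k ^ 2) := by
  have h : (({1, -1} : Finset ℝ)).card = 2 := Finset.card_pair (by norm_num)
  unfold signMats
  refine (Fintype.card_piFinset _).trans ?_
  simp only [Fintype.card_piFinset, h]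
  simp [← pow_mul, sq]

lemma Sk_eq (k : ℕ) :
    Sk k = ((signMats k).erase (Matrix.of fun _ _ => (-1 : ℝ)) : Finset _) := by
  ext M
  simp only [Sk, Set.mem_ofPred_eq, Finset.coe_erase, Set.mem_sdiff, Finset.mem_coe,
    mem_signMats, Set.mem_singleton_iff]
  refine and_congr_right fun _ => not_congr ?_
  constructor
  · intro h; ext i j; simpa using h i j
  · rintro rfl i j; simp

lemma ncard_Sk (k : ℕ) : (Sk k).ncard = 2 ^ (k ^ 2) - 1 := by
  rw [Sk_eq, Set.ncard_coe_finset, Finset.card_erase_of_mem, card_signMats]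
  exact mem_signMats.2 fun i j => Or.inr rfl

lemma ncard_Sk_lt (k : ℕ) (i j : Fin k) :
    (Sk k).ncard < 2 * {M ∈ Sk k | M i j = 1}.ncard := by
  classical
  have h1 : {M ∈ Sk k | M i j = 1} = ((signMats k).filter fun M => M i j = 1 : Finset _) := by
    ext M
    simp only [Sk, Set.mem_ofPred_eq, Finset.coe_filter, mem_signMats]
    constructor
    · rintro ⟨⟨h, -⟩, h'⟩; exact ⟨h, h'⟩
    · rintro ⟨h, h'⟩
      refine ⟨⟨h, fun h2 => ?_⟩, h'⟩
      have := h2 i j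
      linarith
  have h2 : ((signMats k).filter fun M => M i j = 1).card
      = ((signMats k).filter fun M => ¬ M i j = 1).card := by
    refine Finset.card_bij' (fun M _ => -M) (fun M _ => -M) ?_ ?_ ?_ ?_
    · intro M hM
      simp only [Finset.mem_filter, mem_signMats, Matrix.neg_apply] at hM ⊢
      refine ⟨fun a b => ?_, ?_⟩
      · rcases hM.1 a b with h | h <;> simp [h]
      · rw [hM.2]; norm_num
    · intro M hM
      simp only [Finset.mem_filter, mem_signMats, Matrix.neg_apply] at hM ⊢
      refine ⟨fun a b => ?_, ?_⟩
      · rcases hM.1 a b with h | h <;> simp [h]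
      · rw [(hM.1 i j).resolve_left hM.2]; norm_num
    · intro M _; simp
    · intro M _; simp
  have h3 := Finset.card_filter_add_card_filter_not (s := signMats k) (fun M => M i j = 1)
  rw [h1, Set.ncard_coe_finset, ncard_Sk]
  rw [card_signMats] at h3
  have : 0 < 2 ^ (k ^ 2) := by positivity
  omega

/-! ### The all-ones matrix -/

lemma matOpNorm_ones (k : ℕ) (hk : 0 < k) :
    matOpNorm k (Matrix.of fun _ _ => (1 : ℝ)) = (k : ℝ) := by
  have hk' : (0 : ℝ) < k := by exact_mod_cast hk
  unfold matOpNorm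
  refine ContinuousLinearMap.opNorm_eq_of_bounds hk'.le ?_ ?_
  · intro x
    refine abs_le_of_sq_le_sq' ?_ (by positivity) |>.2
    have h := Finset.sum_mul_sq_le_sq_mul_sq Finset.univ (fun _ : Fin k => (1 : ℝ)) (fun i => x i)
    simp only [one_mul, one_pow, Finset.sum_const, Finset.card_univ, Fintype.card_fin,
      nsmul_eq_mul, mul_one] at h
    rw [mul_pow, EuclideanSpace.real_norm_sq_eq, EuclideanSpace.real_norm_sq_eq]
    simp only [LinearMap.coe_toContinuousLinearMap', Matrix.toLpLin_apply, Matrix.mulVec,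
      dotProduct, Matrix.of_apply, one_mul, Finset.sum_const, Finset.card_univ, Fintype.card_fin,
      nsmul_eq_mul]
    nlinarith
  · intro N hN h
    have h1 := h (WithLp.toLp 2 fun _ => (1 : ℝ))
    have e : (LinearMap.toContinuousLinearMap (Matrix.toEuclideanLin
        (Matrix.of fun _ _ : Fin k => (1 : ℝ)))) (WithLp.toLp 2 fun _ => (1 : ℝ))
        = (k : ℝ) • (WithLp.toLp 2 fun _ => (1 : ℝ)) := by
      ext i
      simp [Matrix.toLpLin_apply, Matrix.mulVec, dotProduct]
    rw [e, norm_smul, Real.norm_of_nonneg hk'.le] at h1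
    refine le_of_mul_le_mul_right h1 (norm_pos_iff.2 fun h0 => ?_)
    have := congrArg (fun v : EuclideanSpace ℝ (Fin k) => v ⟨0, hk⟩) h0
    simp at this

/-! ### A finite net for the operator norm -/

/-- The multiples of `1 / (4k)` in `[-1, 1]`. -/
noncomputable def grid (k : ℕ) : Finset ℝ :=
  (Finset.Icc (-(4 * k : ℤ)) (4 * k)).image fun n : ℤ => (n : ℝ) / (4 * k)

lemma card_grid_le (k : ℕ) : (grid k).card ≤ 8 * k + 1 := by
  refine Finset.card_image_le.trans ?_
  rw [Int.card_Icc]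
  omega

/-- The vectors of Euclidean norm at most one whose coordinates lie in `grid k`. -/
noncomputable def net (k : ℕ) : Finset (Fin k → ℝ) :=
  (Fintype.piFinset fun _ => grid k).filter fun x => ∑ i, x i ^ 2 ≤ 1

lemma card_net_le (k : ℕ) : (net k).card ≤ (8 * k + 1) ^ k := by
  refine (Finset.card_filter_le _ _).trans ?_
  rw [Fintype.card_piFinset]
  simpa using Nat.pow_le_pow_left (card_grid_le k) k

/-- Rounding towards zero does not increase the absolute value, which keeps rounded unit vectors
in the unit ball. -/
lemma exists_grid (k : ℕ) (hk : 0 < k) (t : ℝ) (ht : |t| ≤ 1) :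
    ∃ s ∈ grid k, |s| ≤ |t| ∧ |t - s| ≤ 1 / (4 * k) := by
  have hk' : (0 : ℝ) < 4 * k := by positivity
  have key : ∀ u : ℝ, 0 ≤ u → u ≤ 1 → ∃ n : ℤ, 0 ≤ n ∧ n ≤ 4 * k ∧ (n : ℝ) / (4 * k) ≤ u ∧
      u - n / (4 * k) ≤ 1 / (4 * k) := by
    intro u h0 h1
    have hf := Int.floor_le (u * (4 * k))
    refine ⟨⌊u * (4 * k)⌋, Int.floor_nonneg.2 (by positivity), ?_, ?_, ?_⟩
    · have : (⌊u * (4 * k)⌋ : ℝ) ≤ ((4 * k : ℤ) : ℝ) := by push_cast; nlinarith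
      exact_mod_cast this
    · rwa [div_le_iff₀ hk']
    · rw [sub_le_iff_le_add, ← add_div, le_div_iff₀ hk']
      have := Int.lt_floor_add_one (u * (4 * k))
      linarith
  obtain ⟨n, hn0, hn1, hn2, hn3⟩ := key |t| (abs_nonneg t) ht
  have hq : (0 : ℝ) ≤ (n : ℝ) / (4 * k) := by
    have : (0 : ℝ) ≤ n := by exact_mod_cast hn0
    positivity
  rcases le_total 0 t with h | h
  · rw [abs_of_nonneg h] at *
    refine ⟨n / (4 * k), Finset.mem_image.2 ⟨n, Finset.mem_Icc.2 ⟨by omega, hn1⟩, rfl⟩, ?_, ?_⟩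
    · rwa [abs_of_nonneg hq]
    · rwa [abs_of_nonneg (by linarith)]
  · rw [abs_of_nonpos h] at *
    refine ⟨-(n / (4 * k)), Finset.mem_image.2 ⟨-n, Finset.mem_Icc.2 ⟨by omega, by omega⟩, ?_⟩,
      ?_, ?_⟩
    · push_cast; ring
    · rwa [abs_neg, abs_of_nonneg hq]
    · rw [abs_of_nonpos (by linarith)]; linarith

lemma exists_net (k : ℕ) (hk : 0 < k) (x : EuclideanSpace ℝ (Fin k)) (hx : ‖x‖ ≤ 1) :
    ∃ z : EuclideanSpace ℝ (Fin k), (fun i => z i) ∈ net k ∧ ‖z‖ ≤ 1 ∧ ‖x - z‖ ≤ 1 / 4 := by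
  have hk1 : (1 : ℝ) ≤ k := by exact_mod_cast hk
  have hc : ∀ i, |x i| ≤ 1 := fun i => (PiLp.norm_apply_le x i).trans hx
  choose s hs1 hs2 hs3 using fun i => exists_grid k hk (x i) (hc i)
  have hsum : ∑ i, s i ^ 2 ≤ 1 := by
    calc ∑ i, s i ^ 2 ≤ ∑ i, x i ^ 2 := Finset.sum_le_sum fun i _ => sq_le_sq.2 (hs2 i)
      _ = ‖x‖ ^ 2 := (EuclideanSpace.real_norm_sq_eq x).symm
      _ ≤ 1 := pow_le_one₀ (norm_nonneg _) hx
  refine ⟨WithLp.toLp 2 s, ?_, ?_, ?_⟩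
  · simp only [net, Finset.mem_filter, Fintype.mem_piFinset]
    exact ⟨hs1, hsum⟩
  · refine (sq_le_one_iff₀ (norm_nonneg _)).1 ?_
    rw [EuclideanSpace.real_norm_sq_eq]
    exact hsum
  · refine abs_le_of_sq_le_sq' ?_ (by norm_num) |>.2
    rw [EuclideanSpace.real_norm_sq_eq]
    calc ∑ i, (x - WithLp.toLp 2 s) i ^ 2 ≤ ∑ _i : Fin k, (1 / (4 * k : ℝ)) ^ 2 := by
          refine Finset.sum_le_sum fun i _ => sq_le_sq.2 ?_
          rw [abs_of_nonneg (by positivity : (0 : ℝ) ≤ 1 / (4 * k))]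
          exact hs3 i
      _ = 1 / 16 * (1 / k) := by
          simp only [Finset.sum_const, Finset.card_univ, Fintype.card_fin, nsmul_eq_mul]
          field_simp
          norm_num
      _ ≤ (1 / 4) ^ 2 := by
          have : 1 / (k : ℝ) ≤ 1 := by rw [div_le_one (by linarith)]; exact hk1
          linarith

lemma inner_toEuclideanLin (k : ℕ) (M : Matrix (Fin k) (Fin k) ℝ)
    (x y : EuclideanSpace ℝ (Fin k)) :
    inner ℝ (LinearMap.toContinuousLinearMap (Matrix.toEuclideanLin M) x) y
      = ∑ i, ∑ j, M i j * x j * y i := by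
  simp [PiLp.inner_apply, Matrix.toLpLin_apply, Matrix.mulVec, dotProduct, Finset.mul_sum, mul_comm]

/-- Replacing both unit vectors by net points changes the bilinear form by at most `‖M‖ / 2`, which
is absorbed into the left-hand side. -/
lemma matOpNorm_le_of_net (k : ℕ) (hk : 0 < k) (M : Matrix (Fin k) (Fin k) ℝ) (s : ℝ)
    (h : ∀ x ∈ net k, ∀ y ∈ net k, ∑ i, ∑ j, M i j * x j * y i ≤ s) :
    matOpNorm k M ≤ 2 * s := by
  unfold matOpNorm
  set A := LinearMap.toContinuousLinearMap (Matrix.toEuclideanLin M) with hA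
  have form : ∀ x y : EuclideanSpace ℝ (Fin k), ‖x‖ ≤ 1 → ‖y‖ ≤ 1 →
      inner ℝ (A x) y ≤ s + ‖A‖ / 2 := by
    intro x y hx hy
    obtain ⟨x', hx1, hx2, hx3⟩ := exists_net k hk x hx
    obtain ⟨y', hy1, hy2, hy3⟩ := exists_net k hk y hy
    have h1 : inner ℝ (A x') y' ≤ s := by
      rw [hA, inner_toEuclideanLin]; exact h _ hx1 _ hy1
    have h2 : inner ℝ (A (x - x')) y ≤ ‖A‖ * (1 / 4) * 1 :=
      (real_inner_le_norm _ _).trans (mul_le_mul (A.le_opNorm_of_le hx3) hy (norm_nonneg _)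
        (by positivity))
    have h3 : inner ℝ (A x') (y - y') ≤ ‖A‖ * 1 * (1 / 4) :=
      (real_inner_le_norm _ _).trans (mul_le_mul (A.le_opNorm_of_le hx2) hy3 (norm_nonneg _)
        (by positivity))
    rw [map_sub, inner_sub_left] at h2
    rw [inner_sub_right] at h3
    linarith
  have h0 : 0 ≤ s + ‖A‖ / 2 := by simpa using form 0 0 (by simp) (by simp)
  have : ‖A‖ ≤ s + ‖A‖ / 2 := by
    refine ContinuousLinearMap.opNorm_le_of_unit_norm h0 fun x hx => ?_
    by_cases hAx : ‖A x‖ = 0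
    · rw [hAx]; exact h0
    have := form x (‖A x‖⁻¹ • A x) hx.le (by
      rw [norm_smul, norm_inv, norm_norm, inv_mul_cancel₀ hAx])
    rw [real_inner_smul_right, real_inner_self_eq_norm_sq, sq, inv_mul_cancel_left₀ hAx] at this
    exact this
  linarith

/-! ### Exponential moments and the union bound -/

/-- The exponential moment factorises over the independent entries, and each factor is controlled
by `cosh u ≤ exp (u² / 2)`. -/
lemma sum_exp_form_le (k : ℕ) (l : ℝ) (x y : Fin k → ℝ)
    (hx : ∑ i, x i ^ 2 ≤ 1) (hy : ∑ i, y i ^ 2 ≤ 1) :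
    ∑ M ∈ signMats k, Real.exp (l * ∑ i, ∑ j, M i j * x j * y i)
      ≤ 2 ^ (k ^ 2) * Real.exp (l ^ 2 / 2) := by
  have h1 : ∑ M ∈ signMats k, Real.exp (l * ∑ i, ∑ j, M i j * x j * y i)
      = ∏ i, ∏ j, ∑ e ∈ ({1, -1} : Finset ℝ), Real.exp (l * (e * x j * y i)) := by
    simp only [Finset.prod_univ_sum]
    refine Finset.sum_congr rfl fun M _ => ?_
    simp only [Finset.mul_sum, Real.exp_sum]
  have h2 : ∀ i j, ∑ e ∈ ({1, -1} : Finset ℝ), Real.exp (l * (e * x j * y i))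
      ≤ 2 * Real.exp (l ^ 2 / 2 * (x j ^ 2 * y i ^ 2)) := by
    intro i j
    rw [Finset.sum_pair (by norm_num)]
    have := Real.cosh_le_exp_half_sq (l * x j * y i)
    rw [Real.cosh_eq] at this
    have e1 : l * (1 * x j * y i) = l * x j * y i := by ring
    have e2 : l * (-1 * x j * y i) = -(l * x j * y i) := by ring
    have e3 : l ^ 2 / 2 * (x j ^ 2 * y i ^ 2) = (l * x j * y i) ^ 2 / 2 := by ring
    rw [e1, e2, e3]
    linarith
  have h0 : ∀ i j, 0 ≤ ∑ e ∈ ({1, -1} : Finset ℝ), Real.exp (l * (e * x j * y i)) :=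
    fun i j => Finset.sum_nonneg fun e _ => (Real.exp_pos _).le
  rw [h1]
  calc _ ≤ ∏ i, ∏ j, 2 * Real.exp (l ^ 2 / 2 * (x j ^ 2 * y i ^ 2)) :=
        Finset.prod_le_prod (fun i _ => Finset.prod_nonneg fun j _ => h0 i j)
          fun i _ => Finset.prod_le_prod (fun j _ => h0 i j) fun j _ => h2 i j
    _ = 2 ^ (k ^ 2) * Real.exp (l ^ 2 / 2 * ((∑ j, x j ^ 2) * ∑ i, y i ^ 2)) := by
        simp only [Finset.prod_mul_distrib, Finset.prod_const, Finset.card_univ, Fintype.card_fin,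
          ← Real.exp_sum, ← Finset.mul_sum, ← Finset.sum_mul, ← pow_mul, ← sq]
    _ ≤ 2 ^ (k ^ 2) * Real.exp (l ^ 2 / 2) := by
        gcongr
        have : (∑ j, x j ^ 2) * ∑ i, y i ^ 2 ≤ 1 :=
          mul_le_one₀ hx (Finset.sum_nonneg fun i _ => sq_nonneg _) hy
        have hl : 0 ≤ l ^ 2 / 2 := by positivity
        nlinarith

lemma card_large_norm_le (k : ℕ) (hk : 0 < k) (t : ℝ) (ht : 0 ≤ t) :
    ({M ∈ Sk k | t < matOpNorm k M}.ncard : ℝ)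
      ≤ 2 ^ (k ^ 2) * ((8 * k + 1 : ℝ) ^ (2 * k) * Real.exp (-t ^ 2 / 8)) := by
  classical
  set B := (signMats k).filter fun M => t < matOpNorm k M with hB
  have hsub : ({M ∈ Sk k | t < matOpNorm k M}.ncard : ℝ) ≤ B.card := by
    rw [← Set.ncard_coe_finset B]
    refine Nat.cast_le.2 (Set.ncard_le_ncard ?_ (Finset.finite_toSet _))
    rintro M ⟨hM, hMt⟩
    exact Finset.mem_coe.2 (Finset.mem_filter.2 ⟨mem_signMats.2 hM.1, hMt⟩)
  set F : Matrix (Fin k) (Fin k) ℝ → (Fin k → ℝ) → (Fin k → ℝ) → ℝ := fun M x y =>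
    Real.exp (t / 2 * ∑ i, ∑ j, M i j * x j * y i) with hF
  have hFpos : ∀ M x y, 0 ≤ F M x y := fun M x y => (Real.exp_pos _).le
  have hone : ∀ M ∈ B, Real.exp (t ^ 2 / 4) ≤ ∑ x ∈ net k, ∑ y ∈ net k, F M x y := by
    intro M hM
    have hMt := (Finset.mem_filter.1 hM).2
    obtain ⟨x, hx, y, hy, hxy⟩ : ∃ x ∈ net k, ∃ y ∈ net k,
        t / 2 < ∑ i, ∑ j, M i j * x j * y i := by
      by_contra! hcon
      have := matOpNorm_le_of_net k hk M (t / 2) hcon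
      linarith
    calc Real.exp (t ^ 2 / 4) ≤ F M x y := by
          refine Real.exp_le_exp.2 ?_
          nlinarith
      _ ≤ ∑ y ∈ net k, F M x y :=
          Finset.single_le_sum (f := fun y => F M x y) (fun y _ => hFpos M x y) hy
      _ ≤ _ := Finset.single_le_sum (f := fun x => ∑ y ∈ net k, F M x y)
          (fun x _ => Finset.sum_nonneg fun y _ => hFpos M x y) hx
  have htot : (B.card : ℝ) * Real.exp (t ^ 2 / 4)
      ≤ (8 * k + 1 : ℝ) ^ (2 * k) * (2 ^ (k ^ 2) * Real.exp (t ^ 2 / 8)) := by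
    calc (B.card : ℝ) * Real.exp (t ^ 2 / 4) = ∑ M ∈ B, Real.exp (t ^ 2 / 4) := by simp
      _ ≤ ∑ M ∈ B, ∑ x ∈ net k, ∑ y ∈ net k, F M x y := Finset.sum_le_sum hone
      _ ≤ ∑ M ∈ signMats k, ∑ x ∈ net k, ∑ y ∈ net k, F M x y :=
          Finset.sum_le_sum_of_subset_of_nonneg (Finset.filter_subset _ _) fun M _ _ =>
            Finset.sum_nonneg fun x _ => Finset.sum_nonneg fun y _ => hFpos M x y
      _ = ∑ x ∈ net k, ∑ y ∈ net k, ∑ M ∈ signMats k, F M x y := by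
          rw [Finset.sum_comm]
          exact Finset.sum_congr rfl fun x _ => Finset.sum_comm
      _ ≤ ∑ x ∈ net k, ∑ y ∈ net k, 2 ^ (k ^ 2) * Real.exp (t ^ 2 / 8) := by
          refine Finset.sum_le_sum fun x hx => Finset.sum_le_sum fun y hy => ?_
          have := sum_exp_form_le k (t / 2) x y (Finset.mem_filter.1 hx).2
            (Finset.mem_filter.1 hy).2
          rwa [show (t / 2) ^ 2 / 2 = t ^ 2 / 8 by ring] at this
      _ = ((net k).card : ℝ) ^ 2 * (2 ^ (k ^ 2) * Real.exp (t ^ 2 / 8)) := by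
          simp only [Finset.sum_const, nsmul_eq_mul]; ring
      _ ≤ _ := by
          have hn : ((net k).card : ℝ) ≤ (8 * k + 1 : ℝ) ^ k := by exact_mod_cast card_net_le k
          rw [mul_comm 2 k, pow_mul]
          gcongr
  refine hsub.trans (le_of_mul_le_mul_right (htot.trans (le_of_eq ?_)) (Real.exp_pos (t ^ 2 / 4)))
  have : Real.exp (t ^ 2 / 8) = Real.exp (-t ^ 2 / 8) * Real.exp (t ^ 2 / 4) := by
    rw [← Real.exp_add]; congr 1; ring
  rw [this]; ring

/-! ### The limit -/

lemma eventually_bound : ∀ᶠ k : ℕ in Filter.atTop,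
    (8 * k + 1 : ℝ) ^ (2 * k) * Real.exp (-(((k : ℝ) ^ 2) ^ ((1 : ℝ) / 3)) ^ 2 / 8)
      ≤ Real.exp (-(1 / 16) * k) := by
  have h9 : Filter.Tendsto (fun k : ℕ => (9 * k : ℝ)) Filter.atTop Filter.atTop :=
    tendsto_natCast_atTop_atTop.const_mul_atTop (by norm_num)
  have hlog := h9.eventually ((isLittleO_log_rpow_atTop (r := 1 / 3) (by norm_num)).bound
    (c := 1 / 288) (by norm_num))
  filter_upwards [hlog, Filter.eventually_ge_atTop 1] with k h1 hk
  have hk1 : (1 : ℝ) ≤ k := by exact_mod_cast hk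
  have hk0 : (0 : ℝ) < k := by linarith
  set r : ℝ := (k : ℝ) ^ ((1 : ℝ) / 3) with hr
  have hr1 : 1 ≤ r := Real.one_le_rpow hk1 (by norm_num)
  have hr3 : r ^ 3 = k := by
    rw [hr, ← Real.rpow_natCast, ← Real.rpow_mul hk0.le]; norm_num
  have ht : ((k : ℝ) ^ 2) ^ ((1 : ℝ) / 3) = r ^ 2 := by
    rw [hr, ← Real.rpow_natCast, ← Real.rpow_mul hk0.le, ← Real.rpow_natCast,
      ← Real.rpow_mul hk0.le]; norm_num
  have hl : Real.log (9 * k) ≤ r / 32 := by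
    have h2 : (9 : ℝ) ^ ((1 : ℝ) / 3) ≤ 9 := by
      simpa using Real.rpow_le_rpow_of_exponent_le (x := (9 : ℝ)) (by norm_num)
        (by norm_num : (1 : ℝ) / 3 ≤ 1)
    have h3 := (Real.le_norm_self _).trans h1
    rw [Real.norm_of_nonneg (by positivity : (0 : ℝ) ≤ (9 * k : ℝ) ^ ((1 : ℝ) / 3)),
      Real.mul_rpow (by norm_num) hk0.le, ← hr] at h3
    nlinarith
  have hpow : (8 * k + 1 : ℝ) ^ (2 * k) ≤ Real.exp (2 * k * (r / 32)) := by
    calc (8 * k + 1 : ℝ) ^ (2 * k) ≤ (9 * k : ℝ) ^ (2 * k) := by gcongr; linarith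
      _ = Real.exp (2 * k * Real.log (9 * k)) := by
          rw [← Real.exp_log (by positivity : (0 : ℝ) < 9 * k), ← Real.exp_nat_mul,
            Real.exp_log (by positivity : (0 : ℝ) < 9 * k)]
          push_cast; rfl
      _ ≤ _ := by gcongr
  rw [ht]
  calc _ ≤ Real.exp (2 * k * (r / 32)) * Real.exp (-(r ^ 2) ^ 2 / 8) := by gcongr
    _ = Real.exp (2 * k * (r / 32) + -(r ^ 2) ^ 2 / 8) := (Real.exp_add _ _).symm
    _ ≤ _ := by
        refine Real.exp_le_exp.2 ?_
        rw [show (r ^ 2) ^ 2 = r ^ 3 * r by ring, hr3]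
        nlinarith

lemma tendsto_fraction : Filter.Tendsto
      (fun k : ℕ =>
        ({M ∈ Sk k | ((k : ℝ) ^ 2) ^ ((1 : ℝ) / 3) < matOpNorm k M}.ncard : ℝ) /
          ((Sk k).ncard : ℝ))
      Filter.atTop (nhds 0) := by
  have hlim : Filter.Tendsto (fun k : ℕ => 2 * Real.exp (-(1 / 16) * k)) Filter.atTop (nhds 0) := by
    have h : Filter.Tendsto (fun k : ℕ => -(1 / 16) * (k : ℝ)) Filter.atTop Filter.atBot :=
      tendsto_natCast_atTop_atTop.const_mul_atTop_of_neg (by norm_num)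
    simpa using (Real.tendsto_exp_atBot.comp h).const_mul 2
  refine squeeze_zero' (Filter.Eventually.of_forall fun k => by positivity) ?_ hlim
  filter_upwards [eventually_bound, Filter.eventually_ge_atTop 1] with k h1 hk
  have h2 := card_large_norm_le k hk (((k : ℝ) ^ 2) ^ ((1 : ℝ) / 3)) (by positivity)
  have hpow : (2 : ℝ) ≤ 2 ^ (k ^ 2) := le_self_pow₀ (by norm_num) (by positivity)
  have hcard : ((Sk k).ncard : ℝ) = 2 ^ (k ^ 2) - 1 := by
    rw [ncard_Sk, Nat.cast_sub Nat.one_le_two_pow]; push_cast; rfl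
  rw [hcard, div_le_iff₀ (by linarith)]
  have h3 := mul_le_mul_of_nonneg_left h1 (by positivity : (0 : ℝ) ≤ 2 ^ (k ^ 2))
  have h4 := Real.exp_pos (-(1 / 16) * (k : ℝ))
  nlinarith

theorem stmt13 :
    (∀ k : ℕ, 0 < k → (Sk k).ncard = 2 ^ (k ^ 2) - 1) ∧
    (∀ k : ℕ, 0 < k → ∀ i j : Fin k,
      (Sk k).ncard < 2 * {M ∈ Sk k | M i j = 1}.ncard) ∧
    (∀ k : ℕ, 0 < k → matOpNorm k (Matrix.of fun _ _ => (1 : ℝ)) = (k : ℝ)) ∧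
    (∀ k : ℕ, 0 < k → ((k : ℝ) ^ 2) ^ ((1 : ℝ) / 2) = (k : ℝ)) ∧
    Filter.Tendsto
      (fun k : ℕ =>
        ({M ∈ Sk k | ((k : ℝ) ^ 2) ^ ((1 : ℝ) / 3) < matOpNorm k M}.ncard : ℝ) /
          ((Sk k).ncard : ℝ))
      Filter.atTop (nhds 0) := by
  refine ⟨fun k _ => ncard_Sk k, fun k _ => ncard_Sk_lt k, matOpNorm_ones, fun k _ => ?_,
    tendsto_fraction⟩
  rw [← Real.sqrt_eq_rpow, Real.sqrt_sq (Nat.cast_nonneg k)]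
end
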